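/- Let g : ℝ → ℝ be continuous, non-decreasing and everywhere positive, and let C > 0, q ≥ 0, θ > 0 and τ ≥ θq + 1 be constants. Assume the Keller–Osserman condition holds: ∫_b^∞ (∫_0^t g(s) ds)^{-1/(θ+1)} dt = +∞ for every b > 0. Then for every initial value a ≥ 0 there exists an entire solution v : [0,∞) → ℝ of the Cauchy problem (★): v is continuous on [0,∞) with v(0) = a, v is differentiable at 0 from the right with v'(0) = 0, for every r > 0 the derivative v'(r) exists and equals C · r^{-q} · (∫_0^r s^{τ-1} g(v(s)) ds)^{1/θ}, and v'(r) > 0 and v''(r) > 0 for all r > 0. -/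

import Mathlib

open Real MeasureTheory Set Filter Topology ENNReal

/-- The right-hand side of the Cauchy problem (★):
`C · r^{-q} · (∫_0^r s^{τ-1} g(v(s)) ds)^{1/θ}`. -/
noncomputable def cauchyRHS (C q τ θ : ℝ) (g v : ℝ → ℝ) (r : ℝ) : ℝ :=
  C * r ^ (-q) * (∫ s in (0:ℝ)..r, s ^ (τ - 1) * g (v s)) ^ (1 / θ)

/-- `v : ℝ → ℝ` solves the Cauchy problem (★) on `[0, R)` (with `R ∈ (0, ∞]` an
extended nonnegative real): `v` is continuous on `[0, R)`, `v 0 = a`, and at every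
`r ∈ (0, R)` the derivative of `v` exists and is given by `cauchyRHS`. -/
def SolvesCauchy (C q τ θ a : ℝ) (g : ℝ → ℝ) (R : ℝ≥0∞) (v : ℝ → ℝ) : Prop :=
  ContinuousOn v {r : ℝ | 0 ≤ r ∧ ENNReal.ofReal r < R} ∧
  v 0 = a ∧
  ∀ r : ℝ, 0 < r → ENNReal.ofReal r < R → HasDerivAt v (cauchyRHS C q τ θ g v r) r

/-- The Keller–Osserman condition:
`∫_b^∞ (∫_0^t g(s) ds)^{-1/(θ+1)} dt = +∞` for every `b > 0`. -/
def KellerOsserman (θ : ℝ) (g : ℝ → ℝ) : Prop :=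
  ∀ b : ℝ, 0 < b →
    ∫⁻ t in Set.Ioi b, ENNReal.ofReal ((∫ s in (0:ℝ)..t, g s) ^ (-(1 / (θ + 1)))) = ⊤

/-! Integrating (★) turns it into the fixed-point equation `v = T v` for an operator `T` that is
monotone on non-decreasing functions, so by Tarski's argument the pointwise supremum of all
non-decreasing `u ≤ T u` is a solution on `[0, ∞)`, provided it is finite. To bound such a `u` at
`R`, let `v = T u` and `J(r) = ∫_0^r s^{τ-1} g(u(s)) ds`. Multiplying `v' = C r^{-q} J^{1/θ}` by
`g(v) ≥ g(u)` and integrating bounds `J^{(θ+1)/θ}` by a multiple of `∫_a^v g`, and hence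
`v' ≤ L(R) (∫_a^v g)^{1/(θ+1)}` on `(0, R]`; the power of `r` in front is non-negative exactly
because `τ ≥ θq + 1`. As the reciprocal of the right-hand side has divergent integral by the
Keller–Osserman condition, `v` is bounded at `R` independently of `u`.

The signs of `v'` and `v''` follow from the equation: `v'' > 0` amounts to
`q J(r) / r < r^{τ-1} g(v(r)) / θ`, which holds since `J(r) ≤ g(v(r)) r^τ / τ` and `θq < τ`. -/

section Calculus

lemma image_sub_le_image_sub_of_hasDerivAt_le {φ ψ φ' ψ' : ℝ → ℝ} {a b : ℝ} (hab : a ≤ b)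
    (hφ : ContinuousOn φ (Icc a b)) (hψ : ContinuousOn ψ (Icc a b))
    (hφ' : ∀ x ∈ Ioo a b, HasDerivAt φ (φ' x) x) (hψ' : ∀ x ∈ Ioo a b, HasDerivAt ψ (ψ' x) x)
    (hle : ∀ x ∈ Ioo a b, φ' x ≤ ψ' x) : φ b - φ a ≤ ψ b - ψ a := by
  rw [← interior_Icc] at hφ' hψ' hle
  have hmono : MonotoneOn (ψ - φ) (Icc a b) :=
    monotoneOn_of_deriv_nonneg (convex_Icc a b) (hψ.sub hφ)
      (fun x hx => ((hψ' x hx).sub (hφ' x hx)).differentiableAt.differentiableWithinAt)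
      fun x hx => by rw [((hψ' x hx).sub (hφ' x hx)).deriv]; exact sub_nonneg.2 (hle x hx)
  have := hmono (left_mem_Icc.2 hab) (right_mem_Icc.2 hab) hab
  simp only [Pi.sub_apply] at this
  linarith

lemma integral_inv_le_mul_sub_of_hasDerivAt_le {f v v' : ℝ → ℝ} {L a b : ℝ} (hab : a ≤ b)
    (hf : Continuous f) (hf_pos : ∀ t, 0 < f t) (hv : ContinuousOn v (Icc a b))
    (hv' : ∀ x ∈ Ioo a b, HasDerivAt v (v' x) x) (hle : ∀ x ∈ Ioo a b, v' x ≤ L * f (v x)) :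
    ∫ t in v a..v b, (f t)⁻¹ ≤ L * (b - a) := by
  have hΦ (x : ℝ) : HasDerivAt (fun y => ∫ t in v a..y, (f t)⁻¹) (f x)⁻¹ x :=
    ((hf.inv₀ fun t => (hf_pos t).ne').integral_hasStrictDerivAt (v a) x).hasDerivAt
  have hΦ_cont : Continuous fun y => ∫ t in v a..y, (f t)⁻¹ :=
    continuous_iff_continuousAt.2 fun x => (hΦ x).continuousAt
  have hcomp := image_sub_le_image_sub_of_hasDerivAt_le hab (hΦ_cont.comp_continuousOn hv)
    (continuous_const_mul L).continuousOn (fun x hx => (hΦ (v x)).comp x (hv' x hx))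
    (fun x _ => (hasDerivAt_id x).const_mul L) fun x hx => by
      rw [mul_one, inv_mul_le_iff₀ (hf_pos _), mul_comm]
      exact hle x hx
  simpa [mul_sub] using hcomp

lemma monotone_integral_of_nonneg {f : ℝ → ℝ} (hf : Continuous f) (hf_nonneg : ∀ t, 0 ≤ f t)
    (a : ℝ) : Monotone fun x => ∫ t in a..x, f t :=
  monotone_of_deriv_nonneg
    (fun x => (hf.integral_hasStrictDerivAt a x).hasDerivAt.differentiableAt)
    fun x => by rw [(hf.integral_hasStrictDerivAt a x).hasDerivAt.deriv]; exact hf_nonneg x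

lemma tendsto_integral_atTop_of_lintegral_eq_top {f : ℝ → ℝ} (hf : Continuous f)
    (hf_nonneg : ∀ t, 0 ≤ f t) {b : ℝ} (htop : ∫⁻ t in Ioi b, ENNReal.ofReal (f t) = ⊤) (a : ℝ) :
    Tendsto (fun x => ∫ t in a..x, f t) atTop atTop := by
  refine (tendsto_atTop_of_monotone (monotone_integral_of_nonneg hf hf_nonneg a)).resolve_right ?_
  rintro ⟨l, hl⟩
  have hnorm (x : ℝ) : ∫ t in b..x, ‖f t‖ = (∫ t in a..x, f t) - ∫ t in a..b, f t := by
    simp only [Real.norm_of_nonneg (hf_nonneg _)]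
    exact (intervalIntegral.integral_interval_sub_left (hf.intervalIntegrable _ _)
      (hf.intervalIntegrable _ _)).symm
  have hint : IntegrableOn f (Ioi b) :=
    integrableOn_Ioi_of_intervalIntegral_norm_tendsto _ b (fun _ => hf.integrableOn_Ioc) tendsto_id
      ((hl.sub_const _).congr fun x => (hnorm x).symm)
  exact ((hasFiniteIntegral_iff_ofReal (.of_forall hf_nonneg)).1 hint.hasFiniteIntegral).ne htop

end Calculus

section FixedPoint

lemma exists_monotone_isFixedPt {α β : Type*} [Preorder α] [ConditionallyCompleteLattice β]
    {T : (α → β) → α → β} (hT : MapsTo T {u | Monotone u} {u | Monotone u})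
    (hT_mono : MonotoneOn T {u | Monotone u}) {u₀ : α → β} (hu₀ : Monotone u₀) (hle : u₀ ≤ T u₀)
    (hbdd : ∀ x, BddAbove ((fun u => u x) '' {u | Monotone u ∧ u ≤ T u})) :
    ∃ v, Monotone v ∧ Function.IsFixedPt T v := by
  set S : Set (α → β) := {u | Monotone u ∧ u ≤ T u}
  set v : α → β := fun x => sSup ((fun u => u x) '' S)
  have le_v {u} (hu : u ∈ S) : u ≤ v := fun x => le_csSup (hbdd x) (mem_image_of_mem _ hu)
  have v_le {x b} (h : ∀ u ∈ S, u x ≤ b) : v x ≤ b :=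
    csSup_le (Set.Nonempty.image _ ⟨u₀, hu₀, hle⟩) (forall_mem_image.2 h)
  have hv : Monotone v := fun x y hxy => v_le fun u hu => (hu.1 hxy).trans (le_v hu y)
  have v_le_T : v ≤ T v := fun x =>
    v_le fun u hu => (hu.2 x).trans (hT_mono hu.1 hv (le_v hu) x)
  have T_le_v : T v ≤ v := le_v ⟨hT hv, hT_mono hv (hT hv) v_le_T⟩
  exact ⟨v, hv, T_le_v.antisymm v_le_T⟩

end FixedPoint

/-- The weighted integral `∫_0^r s^{τ-1} h(s) ds`, which occurs in (★) with `h = g ∘ v`. -/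
noncomputable def radialMoment (τ : ℝ) (h : ℝ → ℝ) (r : ℝ) : ℝ :=
  ∫ s in (0 : ℝ)..r, s ^ (τ - 1) * h s

section RadialMoment

variable {h k : ℝ → ℝ} {τ r : ℝ}

@[simp]
lemma radialMoment_zero : radialMoment τ h 0 = 0 := intervalIntegral.integral_same

lemma intervalIntegrable_rpow_mul_monotone (hτ : 1 ≤ τ) (hh : Monotone h) (a b : ℝ) :
    IntervalIntegrable (fun s => s ^ (τ - 1) * h s) volume a b :=
  hh.intervalIntegrable.continuousOn_mul
    (Real.continuous_rpow_const (sub_nonneg.2 hτ)).continuousOn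

lemma continuous_radialMoment (hτ : 1 ≤ τ) (hh : Monotone h) : Continuous (radialMoment τ h) :=
  intervalIntegral.continuous_primitive (intervalIntegrable_rpow_mul_monotone hτ hh) 0

lemma hasDerivAt_radialMoment (hτ : 1 ≤ τ) (hh : Continuous h) (r : ℝ) :
    HasDerivAt (radialMoment τ h) (r ^ (τ - 1) * h r) r :=
  (((Real.continuous_rpow_const (sub_nonneg.2 hτ)).mul hh).integral_hasStrictDerivAt
    0 r).hasDerivAt

lemma radialMoment_nonneg (hh : ∀ s, 0 ≤ h s) (hr : 0 ≤ r) : 0 ≤ radialMoment τ h r :=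
  intervalIntegral.integral_nonneg hr fun s hs => mul_nonneg (Real.rpow_nonneg hs.1 _) (hh s)

lemma radialMoment_pos (hτ : 1 ≤ τ) (hh : Monotone h) (hh_pos : ∀ s, 0 < h s) (hr : 0 < r) :
    0 < radialMoment τ h r :=
  intervalIntegral.intervalIntegral_pos_of_pos_on (intervalIntegrable_rpow_mul_monotone hτ hh 0 r)
    (fun s hs => mul_pos (Real.rpow_pos_of_pos hs.1 _) (hh_pos s)) hr

lemma radialMoment_le_radialMoment (hτ : 1 ≤ τ) (hh : Monotone h) (hk : Monotone k)
    (hhk : h ≤ k) (hr : 0 ≤ r) : radialMoment τ h r ≤ radialMoment τ k r :=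
  intervalIntegral.integral_mono_on hr (intervalIntegrable_rpow_mul_monotone hτ hh 0 r)
    (intervalIntegrable_rpow_mul_monotone hτ hk 0 r)
    fun s hs => mul_le_mul_of_nonneg_left (hhk s) (Real.rpow_nonneg hs.1 _)

lemma radialMoment_le (hτ : 1 ≤ τ) (hh : Monotone h) (hr : 0 ≤ r) :
    radialMoment τ h r ≤ h r / τ * r ^ τ :=
  calc radialMoment τ h r
      ≤ ∫ s in (0 : ℝ)..r, s ^ (τ - 1) * h r :=
        intervalIntegral.integral_mono_on hr (intervalIntegrable_rpow_mul_monotone hτ hh 0 r)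
          (intervalIntegrable_rpow_mul_monotone hτ monotone_const 0 r)
          fun s hs => mul_le_mul_of_nonneg_left (hh hs.2) (Real.rpow_nonneg hs.1 _)
    _ = h r / τ * r ^ τ := by
        rw [intervalIntegral.integral_mul_const, integral_rpow (Or.inl (by linarith)),
          sub_add_cancel, Real.zero_rpow (by linarith)]
        ring

end RadialMoment

section RightHandSide

variable {g u w : ℝ → ℝ} {C q θ τ r : ℝ}

lemma cauchyRHS_eq : cauchyRHS C q τ θ g u r =
    C * r ^ (-q) * radialMoment τ (g ∘ u) r ^ (1 / θ) := rfl

lemma cauchyRHS_zero (hθ : 0 < θ) : cauchyRHS C q τ θ g u 0 = 0 := by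
  rw [cauchyRHS_eq, radialMoment_zero, Real.zero_rpow (one_div_pos.2 hθ).ne', mul_zero]

lemma cauchyRHS_nonneg (hC : 0 ≤ C) (hg : ∀ t, 0 ≤ g t) (hr : 0 ≤ r) :
    0 ≤ cauchyRHS C q τ θ g u r :=
  mul_nonneg (mul_nonneg hC (Real.rpow_nonneg hr _))
    (Real.rpow_nonneg (radialMoment_nonneg (fun _ => hg _) hr) _)

lemma cauchyRHS_pos (hC : 0 < C) (hτ : 1 ≤ τ) (hgu : Monotone (g ∘ u)) (hg : ∀ t, 0 < g t)
    (hr : 0 < r) : 0 < cauchyRHS C q τ θ g u r :=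
  mul_pos (mul_pos hC (Real.rpow_pos_of_pos hr _))
    (Real.rpow_pos_of_pos (radialMoment_pos hτ hgu (fun _ => hg _) hr) _)

lemma cauchyRHS_le_cauchyRHS (hC : 0 ≤ C) (hθ : 0 ≤ θ) (hτ : 1 ≤ τ) (hg : ∀ t, 0 ≤ g t)
    (hgu : Monotone (g ∘ u)) (hgw : Monotone (g ∘ w)) (huw : g ∘ u ≤ g ∘ w) (hr : 0 ≤ r) :
    cauchyRHS C q τ θ g u r ≤ cauchyRHS C q τ θ g w r :=
  mul_le_mul_of_nonneg_left
    (Real.rpow_le_rpow (radialMoment_nonneg (fun _ => hg _) hr)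
      (radialMoment_le_radialMoment hτ hgu hgw huw hr) (one_div_nonneg.2 hθ))
    (mul_nonneg hC (Real.rpow_nonneg hr _))

lemma cauchyRHS_le (hC : 0 ≤ C) (hθ : 0 < θ) (hτ : 1 ≤ τ) (hgu : Monotone (g ∘ u))
    (hg : ∀ t, 0 ≤ g t) (hr : 0 < r) :
    cauchyRHS C q τ θ g u r ≤ C * (g (u r) / τ) ^ (1 / θ) * r ^ (τ / θ - q) := by
  have hgτ : 0 ≤ g (u r) / τ := div_nonneg (hg _) (by linarith)
  calc C * r ^ (-q) * radialMoment τ (g ∘ u) r ^ (1 / θ)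
      ≤ C * r ^ (-q) * (g (u r) / τ * r ^ τ) ^ (1 / θ) := by
        gcongr
        exacts [radialMoment_nonneg (fun s => hg (u s)) hr.le, radialMoment_le hτ hgu hr.le]
    _ = C * (g (u r) / τ) ^ (1 / θ) * (r ^ (-q) * r ^ (τ * (1 / θ))) := by
        rw [Real.mul_rpow hgτ (by positivity), ← Real.rpow_mul hr.le]
        ring
    _ = C * (g (u r) / τ) ^ (1 / θ) * r ^ (τ / θ - q) := by
        rw [← Real.rpow_add hr, mul_one_div, neg_add_eq_sub]

lemma hasDerivAt_cauchyRHS (hτ : 1 ≤ τ) (hgu : Continuous (g ∘ u)) (hr : 0 < r)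
    (hJ : 0 < radialMoment τ (g ∘ u) r) :
    HasDerivAt (cauchyRHS C q τ θ g u)
      (C * r ^ (-q) * radialMoment τ (g ∘ u) r ^ (1 / θ - 1) *
        (r ^ (τ - 1) * g (u r) / θ - q * radialMoment τ (g ∘ u) r / r)) r := by
  have hpow : HasDerivAt (fun x : ℝ => C * x ^ (-q)) (C * (-q * r ^ (-q - 1))) r :=
    (Real.hasDerivAt_rpow_const (Or.inl hr.ne')).const_mul C
  have hmoment := (hasDerivAt_radialMoment hτ hgu r).rpow_const (p := 1 / θ) (Or.inl hJ.ne')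
  refine (hpow.mul hmoment).congr_deriv ?_
  have hsplit : radialMoment τ (g ∘ u) r ^ (1 / θ) =
      radialMoment τ (g ∘ u) r * radialMoment τ (g ∘ u) r ^ (1 / θ - 1) := by
    rw [Real.rpow_sub_one hJ.ne', mul_div_cancel₀ _ hJ.ne']
  rw [hsplit, Real.rpow_sub_one hr.ne', Function.comp_apply]
  ring

lemma mul_radialMoment_div_lt (hq : 0 ≤ q) (hθ : 0 < θ) (hτ : 1 ≤ τ) (hqτ : θ * q < τ)
    {h : ℝ → ℝ} (hh : Monotone h) (hh_pos : 0 < h r) (hr : 0 < r) :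
    q * radialMoment τ h r / r < r ^ (τ - 1) * h r / θ := by
  have hτ' : 0 < τ := by linarith
  calc q * radialMoment τ h r / r
      ≤ q * (h r / τ * r ^ τ) / r := by gcongr; exact radialMoment_le hτ hh hr.le
    _ = q / τ * (r ^ (τ - 1) * h r) := by rw [Real.rpow_sub_one hr.ne']; ring
    _ < 1 / θ * (r ^ (τ - 1) * h r) := by
        have hdiv : q / τ < 1 / θ := by rw [div_lt_div_iff₀ hτ' hθ]; linarith
        gcongr
    _ = r ^ (τ - 1) * h r / θ := by ring

lemma exists_pos_hasDerivAt_cauchyRHS (hC : 0 < C) (hq : 0 ≤ q) (hθ : 0 < θ) (hτ : 1 ≤ τ)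
    (hqτ : θ * q < τ) (hgu_cont : Continuous (g ∘ u)) (hgu : Monotone (g ∘ u))
    (hg : ∀ t, 0 < g t) (hr : 0 < r) :
    ∃ d, 0 < d ∧ HasDerivAt (cauchyRHS C q τ θ g u) d r := by
  have hJ := radialMoment_pos hτ hgu (fun _ => hg _) hr
  have hlt := mul_radialMoment_div_lt hq hθ hτ hqτ hgu (hg _) hr
  exact ⟨_, mul_pos (by positivity) (sub_pos.2 hlt), hasDerivAt_cauchyRHS hτ hgu_cont hr hJ⟩

end RightHandSide

/-- The right-hand side of (★) continued by its limit `0` to `r ≤ 0`, so that the Picard operator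
acts on functions on all of `ℝ` and produces differentiable ones. -/
noncomputable def extendedRHS (C q τ θ : ℝ) (g u : ℝ → ℝ) (r : ℝ) : ℝ :=
  cauchyRHS C q τ θ g u (max r 0)

/-- The integral operator of (★): its fixed points solve the Cauchy problem on `[0, ∞)`. -/
noncomputable def picardOperator (C q τ θ a : ℝ) (g u : ℝ → ℝ) (r : ℝ) : ℝ :=
  a + ∫ s in (0 : ℝ)..r, extendedRHS C q τ θ g u s

section Picard

variable {g u w : ℝ → ℝ} {C q θ τ a r : ℝ}

lemma extendedRHS_of_nonneg (hr : 0 ≤ r) :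
    extendedRHS C q τ θ g u r = cauchyRHS C q τ θ g u r := by rw [extendedRHS, max_eq_left hr]

lemma extendedRHS_of_nonpos (hθ : 0 < θ) (hr : r ≤ 0) : extendedRHS C q τ θ g u r = 0 := by
  rw [extendedRHS, max_eq_right hr, cauchyRHS_zero hθ]

lemma extendedRHS_nonneg (hC : 0 ≤ C) (hg : ∀ t, 0 ≤ g t) (r : ℝ) :
    0 ≤ extendedRHS C q τ θ g u r :=
  cauchyRHS_nonneg hC hg (le_max_right _ _)

lemma tendsto_cauchyRHS_zero (hC : 0 ≤ C) (hθ : 0 < θ) (hτ : 1 ≤ τ) (hqτ : θ * q < τ)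
    (hg : ∀ t, 0 ≤ g t) (hgu : Monotone (g ∘ u)) :
    Tendsto (cauchyRHS C q τ θ g u) (𝓝[>] 0) (𝓝 0) := by
  have hexp : 0 < τ / θ - q := sub_pos.2 ((lt_div_iff₀' hθ).2 hqτ)
  have hbound : Tendsto (fun r : ℝ => C * (g (u 1) / τ) ^ (1 / θ) * r ^ (τ / θ - q))
      (𝓝[>] 0) (𝓝 0) := by
    have := ((Real.continuous_rpow_const hexp.le).const_mul
      (C * (g (u 1) / τ) ^ (1 / θ))).tendsto 0
    rw [Real.zero_rpow hexp.ne', mul_zero] at this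
    exact this.mono_left nhdsWithin_le_nhds
  refine squeeze_zero' ?_ ?_ hbound
  · filter_upwards [self_mem_nhdsWithin] with r hr using cauchyRHS_nonneg hC hg (le_of_lt hr)
  · filter_upwards [Ioc_mem_nhdsGT one_pos] with r hr
    have hr0 := hr.1
    have hgr := hg (u r)
    have hgu1 : g (u r) ≤ g (u 1) := hgu hr.2
    exact (cauchyRHS_le hC hθ hτ hgu hg hr.1).trans (by gcongr)

lemma continuous_extendedRHS (hC : 0 ≤ C) (hθ : 0 < θ) (hτ : 1 ≤ τ) (hqτ : θ * q < τ)
    (hg : ∀ t, 0 ≤ g t) (hgu : Monotone (g ∘ u)) : Continuous (extendedRHS C q τ θ g u) := by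
  have hpos : ContinuousOn (cauchyRHS C q τ θ g u) (Ioi 0) :=
    (continuousOn_const.mul (continuousOn_id.rpow_const fun x hx => Or.inl (ne_of_gt hx))).mul
      ((continuous_radialMoment hτ hgu).rpow_const
        fun _ => Or.inr (one_div_pos.2 hθ).le).continuousOn
  have hIci : ContinuousOn (cauchyRHS C q τ θ g u) (Ici 0) := by
    intro r hr
    rcases eq_or_lt_of_le (mem_Ici.1 hr) with rfl | hr
    · rw [← continuousWithinAt_Ioi_iff_Ici, ContinuousWithinAt, cauchyRHS_zero hθ]
      exact tendsto_cauchyRHS_zero hC hθ hτ hqτ hg hgu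
    · exact (hpos.continuousAt (Ioi_mem_nhds hr)).continuousWithinAt
  exact hIci.comp_continuous (continuous_id.max continuous_const) fun r => le_max_right r 0

lemma hasDerivAt_picardOperator (hC : 0 ≤ C) (hθ : 0 < θ) (hτ : 1 ≤ τ) (hqτ : θ * q < τ)
    (hg : ∀ t, 0 ≤ g t) (hgu : Monotone (g ∘ u)) (r : ℝ) :
    HasDerivAt (picardOperator C q τ θ a g u) (extendedRHS C q τ θ g u r) r :=
  ((continuous_extendedRHS hC hθ hτ hqτ hg hgu).integral_hasStrictDerivAt
    0 r).hasDerivAt.const_add a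

lemma continuous_picardOperator (hC : 0 ≤ C) (hθ : 0 < θ) (hτ : 1 ≤ τ) (hqτ : θ * q < τ)
    (hg : ∀ t, 0 ≤ g t) (hgu : Monotone (g ∘ u)) : Continuous (picardOperator C q τ θ a g u) :=
  continuous_iff_continuousAt.2 fun r =>
    (hasDerivAt_picardOperator hC hθ hτ hqτ hg hgu r).continuousAt

lemma monotone_picardOperator (hC : 0 ≤ C) (hθ : 0 < θ) (hτ : 1 ≤ τ) (hqτ : θ * q < τ)
    (hg : ∀ t, 0 ≤ g t) (hgu : Monotone (g ∘ u)) : Monotone (picardOperator C q τ θ a g u) :=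
  (monotone_integral_of_nonneg (continuous_extendedRHS hC hθ hτ hqτ hg hgu)
    (extendedRHS_nonneg hC hg) 0).const_add a

@[simp]
lemma picardOperator_zero : picardOperator C q τ θ a g u 0 = a := by simp [picardOperator]

lemma picardOperator_of_nonpos (hθ : 0 < θ) (hr : r ≤ 0) :
    picardOperator C q τ θ a g u r = a := by
  have hzero : ∫ s in (0 : ℝ)..r, extendedRHS C q τ θ g u s = ∫ _ in (0 : ℝ)..r, (0 : ℝ) :=
    intervalIntegral.integral_congr fun s hs =>
      extendedRHS_of_nonpos hθ (by rw [uIcc_of_ge hr] at hs; exact hs.2)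
  rw [picardOperator, hzero, intervalIntegral.integral_zero, add_zero]

lemma le_picardOperator (hC : 0 ≤ C) (hθ : 0 < θ) (hg : ∀ t, 0 ≤ g t) (r : ℝ) :
    a ≤ picardOperator C q τ θ a g u r := by
  rcases le_total r 0 with hr | hr
  · exact (picardOperator_of_nonpos hθ hr).ge
  · exact le_add_of_nonneg_right
      (intervalIntegral.integral_nonneg hr fun s _ => extendedRHS_nonneg hC hg s)

lemma picardOperator_le_picardOperator (hC : 0 ≤ C) (hθ : 0 < θ) (hτ : 1 ≤ τ) (hqτ : θ * q < τ)
    (hg : ∀ t, 0 ≤ g t) (hgu : Monotone (g ∘ u)) (hgw : Monotone (g ∘ w)) (huw : g ∘ u ≤ g ∘ w) :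
    picardOperator C q τ θ a g u ≤ picardOperator C q τ θ a g w := by
  intro r
  rcases le_total r 0 with hr | hr
  · rw [picardOperator_of_nonpos hθ hr, picardOperator_of_nonpos hθ hr]
  · exact add_le_add_right (intervalIntegral.integral_mono_on hr
      ((continuous_extendedRHS hC hθ hτ hqτ hg hgu).intervalIntegrable 0 r)
      ((continuous_extendedRHS hC hθ hτ hqτ hg hgw).intervalIntegrable 0 r)
      fun s _ => cauchyRHS_le_cauchyRHS hC hθ.le hτ hg hgu hgw huw (le_max_right s 0)) a

end Picard

/-- `v' = C r^{-q} (∫_0^r s^{τ-1} g(u(s)) ds)^{1/θ}` on `(0, R)` for some continuous `u ≤ v`. The a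
priori estimates need no more than this, so that they cover Picard iterates as well as solutions
of (★), for which `u = v`. -/
structure IsPicardMajorant (C q τ θ : ℝ) (g u v : ℝ → ℝ) (R : ℝ) : Prop where
  continuous : Continuous u
  continuousOn : ContinuousOn v (Icc 0 R)
  hasDerivAt : ∀ s ∈ Ioo 0 R, HasDerivAt v (cauchyRHS C q τ θ g u s) s
  le : ∀ s ∈ Ioo 0 R, u s ≤ v s

section Energy

variable {g u v : ℝ → ℝ} {C q θ τ r R : ℝ}

lemma IsPicardMajorant.mono (h : IsPicardMajorant C q τ θ g u v R) (hr : r ≤ R) :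
    IsPicardMajorant C q τ θ g u v r where
  continuous := h.continuous
  continuousOn := h.continuousOn.mono (Icc_subset_Icc_right hr)
  hasDerivAt s hs := h.hasDerivAt s (Ioo_subset_Ioo_right hr hs)
  le s hs := h.le s (Ioo_subset_Ioo_right hr hs)

lemma IsPicardMajorant.apply_zero_le (h : IsPicardMajorant C q τ θ g u v r) (hC : 0 ≤ C)
    (hg : ∀ t, 0 ≤ g t) (hr : 0 ≤ r) : v 0 ≤ v r := by
  have := image_sub_le_image_sub_of_hasDerivAt_le hr (continuousOn_const (c := (0 : ℝ)))
    h.continuousOn (fun s _ => hasDerivAt_const s 0) h.hasDerivAt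
    fun s hs => cauchyRHS_nonneg hC hg hs.1.le
  rwa [sub_self, sub_nonneg] at this

lemma hasDerivAt_radialMoment_rpow {h : ℝ → ℝ} (hθ : 0 < θ) (hτ : 1 ≤ τ) (hh : Continuous h)
    (s : ℝ) :
    HasDerivAt (fun s => θ / (θ + 1) * radialMoment τ h s ^ ((θ + 1) / θ))
      (radialMoment τ h s ^ (1 / θ) * (s ^ (τ - 1) * h s)) s := by
  have hexp : 1 ≤ (θ + 1) / θ := by rw [le_div_iff₀ hθ]; linarith
  have hsub : (θ + 1) / θ - 1 = 1 / θ := by rw [add_div, div_self hθ.ne', add_sub_cancel_left]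
  refine (((hasDerivAt_radialMoment hτ hh s).rpow_const (Or.inr hexp)).const_mul
    (θ / (θ + 1))).congr_deriv ?_
  rw [hsub]
  field_simp

-- The analogue of energy conservation for `v'' = g(v)`.
lemma IsPicardMajorant.energy_le (h : IsPicardMajorant C q τ θ g u v r) (hg_cont : Continuous g)
    (hg_mono : Monotone g) (hg : ∀ t, 0 ≤ g t) (hC : 0 < C) (hq : 0 ≤ q) (hθ : 0 < θ)
    (hτ : 1 ≤ τ) (hr : 0 ≤ r) :
    θ / (θ + 1) * radialMoment τ (g ∘ u) r ^ ((θ + 1) / θ) ≤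
      r ^ (q + τ - 1) / C * ∫ t in v 0..v r, g t := by
  have hprim (y : ℝ) : HasDerivAt (fun y => ∫ t in v 0..y, g t) (g y) y :=
    (hg_cont.integral_hasStrictDerivAt (v 0) y).hasDerivAt
  have hprim_cont : Continuous fun y => ∫ t in v 0..y, g t :=
    continuous_iff_continuousAt.2 fun y => (hprim y).continuousAt
  have henergy := hasDerivAt_radialMoment_rpow hθ hτ (hg_cont.comp h.continuous)
  have hcomp := image_sub_le_image_sub_of_hasDerivAt_le hr
    (fun s _ => (henergy s).continuousAt.continuousWithinAt)
    ((hprim_cont.comp_continuousOn h.continuousOn).const_mul (r ^ (q + τ - 1) / C))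
    (fun s _ => henergy s)
    (fun s hs => ((hprim (v s)).comp s (h.hasDerivAt s hs)).const_mul _) ?_
  · simpa [Real.zero_rpow (by positivity : (θ + 1) / θ ≠ 0)] using hcomp
  intro s hs
  have hs0 : 0 < s := hs.1
  have hexp : 0 ≤ q + τ - 1 := by linarith
  have hJ := Real.rpow_nonneg (radialMoment_nonneg (τ := τ) (fun t => hg (u t)) hs0.le) (1 / θ)
  have hgu := hg (u s)
  have hguv : g (u s) ≤ g (v s) := hg_mono (h.le s hs)
  calc radialMoment τ (g ∘ u) s ^ (1 / θ) * (s ^ (τ - 1) * g (u s))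
      = radialMoment τ (g ∘ u) s ^ (1 / θ) * (s ^ (q + τ - 1) * s ^ (-q) * g (u s)) := by
        rw [← Real.rpow_add hs0, show q + τ - 1 + -q = τ - 1 by ring]
    _ ≤ radialMoment τ (g ∘ u) s ^ (1 / θ) * (r ^ (q + τ - 1) * s ^ (-q) * g (v s)) := by
        have hsr := hs.2.le
        exact mul_le_mul_of_nonneg_left (by gcongr) hJ
    _ = r ^ (q + τ - 1) / C * (g (v s) * cauchyRHS C q τ θ g u s) := by
        rw [cauchyRHS_eq]
        field_simp

lemma IsPicardMajorant.cauchyRHS_le (h : IsPicardMajorant C q τ θ g u v r)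
    (hg_cont : Continuous g) (hg_mono : Monotone g) (hg : ∀ t, 0 ≤ g t) (hC : 0 < C) (hq : 0 ≤ q)
    (hθ : 0 < θ) (hτ : 1 ≤ τ) (hr : 0 < r) :
    cauchyRHS C q τ θ g u r ≤
      C * ((θ + 1) / (θ * C)) ^ (1 / (θ + 1)) * r ^ ((q + τ - 1) / (θ + 1) - q) *
        (∫ t in v 0..v r, g t) ^ (1 / (θ + 1)) := by
  have henergy := h.energy_le hg_cont hg_mono hg hC hq hθ hτ hr.le
  have hJ := radialMoment_nonneg (τ := τ) (fun s => hg (u s)) hr.le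
  have hI : 0 ≤ ∫ t in v 0..v r, g t :=
    intervalIntegral.integral_nonneg (h.apply_zero_le hC.le hg hr.le) fun t _ => hg t
  rw [cauchyRHS_eq]
  change 0 ≤ radialMoment τ (g ∘ u) r at hJ
  set J := radialMoment τ (g ∘ u) r
  set I := ∫ t in v 0..v r, g t
  have hpow : J ^ ((θ + 1) / θ) ≤ (θ + 1) / (θ * C) * (r ^ (q + τ - 1) * I) :=
    calc J ^ ((θ + 1) / θ) = (θ + 1) / θ * (θ / (θ + 1) * J ^ ((θ + 1) / θ)) := by field_simp
      _ ≤ (θ + 1) / θ * (r ^ (q + τ - 1) / C * I) := by gcongr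
      _ = (θ + 1) / (θ * C) * (r ^ (q + τ - 1) * I) := by field_simp
  calc C * r ^ (-q) * J ^ (1 / θ)
      = C * r ^ (-q) * (J ^ ((θ + 1) / θ)) ^ (1 / (θ + 1)) := by
        rw [← Real.rpow_mul hJ]
        congr 2
        field_simp
    _ ≤ C * r ^ (-q) * ((θ + 1) / (θ * C) * (r ^ (q + τ - 1) * I)) ^ (1 / (θ + 1)) := by gcongr
    _ = C * ((θ + 1) / (θ * C)) ^ (1 / (θ + 1)) *
          (r ^ (-q) * r ^ ((q + τ - 1) * (1 / (θ + 1)))) * I ^ (1 / (θ + 1)) := by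
        rw [Real.mul_rpow (by positivity) (by positivity), Real.mul_rpow (by positivity) hI,
          ← Real.rpow_mul hr.le]
        ring
    _ = C * ((θ + 1) / (θ * C)) ^ (1 / (θ + 1)) * r ^ ((q + τ - 1) / (θ + 1) - q) *
          I ^ (1 / (θ + 1)) := by
        rw [← Real.rpow_add hr, mul_one_div, neg_add_eq_sub]

end Energy

/-- `G(t)^{1/(θ+1)}` with `G(t) = ∫_0^t g`, the denominator of the Keller–Osserman integrand, with
`t` replaced by `max t 1` to make it positive and continuous on all of `ℝ`. -/
noncomputable def ossermanGauge (θ : ℝ) (g : ℝ → ℝ) (t : ℝ) : ℝ :=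
  (∫ s in (0 : ℝ)..max t 1, g s) ^ (1 / (θ + 1))

section KellerOsserman

variable {g : ℝ → ℝ} {C q θ τ a : ℝ}

lemma integral_zero_max_one_pos (hg_cont : Continuous g) (hg_pos : ∀ t, 0 < g t) (t : ℝ) :
    0 < ∫ s in (0 : ℝ)..max t 1, g s :=
  intervalIntegral.intervalIntegral_pos_of_pos (hg_cont.intervalIntegrable _ _) hg_pos
    (lt_max_of_lt_right one_pos)

lemma ossermanGauge_pos (hg_cont : Continuous g) (hg_pos : ∀ t, 0 < g t) (t : ℝ) :
    0 < ossermanGauge θ g t :=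
  Real.rpow_pos_of_pos (integral_zero_max_one_pos hg_cont hg_pos t) _

lemma continuous_ossermanGauge (hg_cont : Continuous g) (hg_pos : ∀ t, 0 < g t) :
    Continuous (ossermanGauge θ g) :=
  ((intervalIntegral.continuous_primitive (fun _ _ => hg_cont.intervalIntegrable _ _) 0).comp
    (continuous_id.max continuous_const)).rpow_const
      fun t => Or.inl (integral_zero_max_one_pos hg_cont hg_pos t).ne'

lemma KellerOsserman.tendsto_integral_inv_ossermanGauge (hKO : KellerOsserman θ g)
    (hg_cont : Continuous g) (hg_pos : ∀ t, 0 < g t) (a : ℝ) :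
    Tendsto (fun x => ∫ t in a..x, (ossermanGauge θ g t)⁻¹) atTop atTop := by
  have hpos := ossermanGauge_pos (θ := θ) hg_cont hg_pos
  refine tendsto_integral_atTop_of_lintegral_eq_top (b := 1)
    ((continuous_ossermanGauge hg_cont hg_pos).inv₀ fun t => (hpos t).ne')
    (fun t => (inv_pos.2 (hpos t)).le) ?_ a
  rw [← hKO 1 one_pos]
  refine setLIntegral_congr_fun measurableSet_Ioi fun t ht => ?_
  have hG := integral_zero_max_one_pos hg_cont hg_pos t
  rw [Pi.inv_apply, ossermanGauge, ← Real.rpow_neg hG.le, max_eq_left (mem_Ioi.1 ht).le]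

lemma exists_integral_rpow_le_mul_ossermanGauge (hg_cont : Continuous g) (hg_pos : ∀ t, 0 < g t)
    (hθ : 0 < θ) (a : ℝ) :
    ∃ κ, ∀ t, a ≤ t → (∫ s in a..t, g s) ^ (1 / (θ + 1)) ≤ κ * ossermanGauge θ g t := by
  set G : ℝ → ℝ := fun t => ∫ s in (0 : ℝ)..t, g s
  have hG_mono : Monotone G := monotone_integral_of_nonneg hg_cont (fun t => (hg_pos t).le) 0
  have hG_one : 0 < G 1 := by simpa using integral_zero_max_one_pos hg_cont hg_pos 1
  have hκ : 0 < 1 + |G a| / G 1 := by positivity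
  refine ⟨(1 + |G a| / G 1) ^ (1 / (θ + 1)), fun t ht => ?_⟩
  have hdiff : ∫ s in a..t, g s = G t - G a :=
    (intervalIntegral.integral_interval_sub_left (hg_cont.intervalIntegrable _ _)
      (hg_cont.intervalIntegrable _ _)).symm
  have hle : ∫ s in a..t, g s ≤ (1 + |G a| / G 1) * G (max t 1) :=
    calc ∫ s in a..t, g s ≤ G (max t 1) + |G a| / G 1 * G 1 := by
          rw [hdiff, div_mul_cancel₀ _ hG_one.ne']
          linarith [hG_mono (le_max_left t 1), neg_abs_le (G a)]
      _ ≤ G (max t 1) + |G a| / G 1 * G (max t 1) := by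
          gcongr
          exact hG_mono (le_max_right t 1)
      _ = (1 + |G a| / G 1) * G (max t 1) := by ring
  have hnonneg : 0 ≤ ∫ s in a..t, g s :=
    intervalIntegral.integral_nonneg ht fun s _ => (hg_pos s).le
  rw [ossermanGauge, ← Real.mul_rpow hκ.le (integral_zero_max_one_pos hg_cont hg_pos t).le]
  exact Real.rpow_le_rpow hnonneg hle (by positivity)

lemma exists_cauchyRHS_le_mul_ossermanGauge (hg_cont : Continuous g) (hg_mono : Monotone g)
    (hg_pos : ∀ t, 0 < g t) (hC : 0 < C) (hq : 0 ≤ q) (hθ : 0 < θ) (hτ : θ * q + 1 ≤ τ)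
    (a R : ℝ) :
    ∃ L, ∀ u v : ℝ → ℝ, IsPicardMajorant C q τ θ g u v R → v 0 = a → ∀ s ∈ Ioo 0 R,
      cauchyRHS C q τ θ g u s ≤ L * ossermanGauge θ g (v s) := by
  obtain ⟨κ, hgauge⟩ := exists_integral_rpow_le_mul_ossermanGauge hg_cont hg_pos hθ a
  have hexp : 0 ≤ (q + τ - 1) / (θ + 1) - q := by
    rw [sub_nonneg, le_div_iff₀ (by positivity)]
    linarith
  have hτ₁ : 1 ≤ τ := by linarith [mul_nonneg hθ.le hq]
  have hg (t : ℝ) : 0 ≤ g t := (hg_pos t).le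
  refine ⟨C * ((θ + 1) / (θ * C)) ^ (1 / (θ + 1)) * R ^ ((q + τ - 1) / (θ + 1) - q) * κ, ?_⟩
  rintro u v h rfl s ⟨hs, hsR⟩
  have hs_maj := h.mono hsR.le
  calc cauchyRHS C q τ θ g u s
      ≤ C * ((θ + 1) / (θ * C)) ^ (1 / (θ + 1)) * s ^ ((q + τ - 1) / (θ + 1) - q) *
          (∫ t in v 0..v s, g t) ^ (1 / (θ + 1)) :=
        hs_maj.cauchyRHS_le hg_cont hg_mono hg hC hq hθ hτ₁ hs
    _ ≤ C * ((θ + 1) / (θ * C)) ^ (1 / (θ + 1)) * R ^ ((q + τ - 1) / (θ + 1) - q) *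
          (κ * ossermanGauge θ g (v s)) := by
        have hR : 0 < R := hs.trans hsR
        have hv_le : v 0 ≤ v s := hs_maj.apply_zero_le hC.le hg hs.le
        gcongr
        · exact Real.rpow_nonneg (intervalIntegral.integral_nonneg hv_le fun t _ => hg t) _
        · exact hgauge _ hv_le
    _ = _ := (mul_assoc _ _ _).symm

lemma KellerOsserman.exists_le_of_isPicardMajorant (hKO : KellerOsserman θ g)
    (hg_cont : Continuous g) (hg_mono : Monotone g) (hg_pos : ∀ t, 0 < g t) (hC : 0 < C)
    (hq : 0 ≤ q) (hθ : 0 < θ) (hτ : θ * q + 1 ≤ τ) (a : ℝ) {R : ℝ} (hR : 0 ≤ R) :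
    ∃ M, ∀ u v : ℝ → ℝ, IsPicardMajorant C q τ θ g u v R → v 0 = a → v R ≤ M := by
  obtain ⟨L, hL⟩ := exists_cauchyRHS_le_mul_ossermanGauge hg_cont hg_mono hg_pos hC hq hθ hτ a R
  obtain ⟨M, hM⟩ := eventually_atTop.1
    ((hKO.tendsto_integral_inv_ossermanGauge hg_cont hg_pos a).eventually_gt_atTop (L * (R - 0)))
  refine ⟨M, fun u v h hv => le_of_not_ge fun hle => ?_⟩
  have hosgood := integral_inv_le_mul_sub_of_hasDerivAt_le hR
    (continuous_ossermanGauge hg_cont hg_pos) (ossermanGauge_pos hg_cont hg_pos) h.continuousOn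
    h.hasDerivAt (hL u v h hv)
  rw [hv] at hosgood
  exact (hM _ hle).not_ge hosgood

end KellerOsserman

section EntireSolution

variable {g v : ℝ → ℝ} {C q θ τ a : ℝ}

lemma isPicardMajorant_picardOperator {u : ℝ → ℝ} (hC : 0 ≤ C) (hθ : 0 < θ) (hτ : 1 ≤ τ)
    (hqτ : θ * q < τ) (hg : ∀ t, 0 ≤ g t) (hu : Continuous u) (hgu : Monotone (g ∘ u))
    (hle : u ≤ picardOperator C q τ θ a g u) (R : ℝ) :
    IsPicardMajorant C q τ θ g u (picardOperator C q τ θ a g u) R where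
  continuous := hu
  continuousOn := (continuous_picardOperator hC hθ hτ hqτ hg hgu).continuousOn
  hasDerivAt s hs := (hasDerivAt_picardOperator hC hθ hτ hqτ hg hgu s).congr_deriv
    (extendedRHS_of_nonneg hs.1.le)
  le s _ := hle s

lemma KellerOsserman.bddAbove_subsolutions (hKO : KellerOsserman θ g) (hg_cont : Continuous g)
    (hg_mono : Monotone g) (hg_pos : ∀ t, 0 < g t) (hC : 0 < C) (hq : 0 ≤ q) (hθ : 0 < θ)
    (hτ : θ * q + 1 ≤ τ) (a r : ℝ) :
    BddAbove ((fun u => u r) '' {u | Monotone u ∧ u ≤ picardOperator C q τ θ a g u}) := by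
  have hg (t : ℝ) : 0 ≤ g t := (hg_pos t).le
  have hqτ : θ * q < τ := by linarith
  have hτ₁ : 1 ≤ τ := by linarith [mul_nonneg hθ.le hq]
  obtain ⟨M, hM⟩ := hKO.exists_le_of_isPicardMajorant hg_cont hg_mono hg_pos hC hq hθ hτ a
    (le_max_right r 0)
  refine ⟨M, forall_mem_image.2 ?_⟩
  rintro u ⟨hu, hle⟩
  set w := picardOperator C q τ θ a g u
  have hgu := hg_mono.comp hu
  have hw : Monotone w := monotone_picardOperator hC.le hθ hτ₁ hqτ hg hgu
  have hw_le : w ≤ picardOperator C q τ θ a g w :=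
    picardOperator_le_picardOperator hC.le hθ hτ₁ hqτ hg hgu (hg_mono.comp hw)
      fun s => hg_mono (hle s)
  calc u r ≤ w r := hle r
    _ ≤ w (max r 0) := hw (le_max_left r 0)
    _ ≤ picardOperator C q τ θ a g w (max r 0) := hw_le _
    _ ≤ M := hM w _ (isPicardMajorant_picardOperator hC.le hθ hτ₁ hqτ hg
        (continuous_picardOperator hC.le hθ hτ₁ hqτ hg hgu) (hg_mono.comp hw) hw_le _)
        picardOperator_zero

lemma KellerOsserman.exists_isFixedPt_picardOperator (hKO : KellerOsserman θ g)
    (hg_cont : Continuous g) (hg_mono : Monotone g) (hg_pos : ∀ t, 0 < g t) (hC : 0 < C)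
    (hq : 0 ≤ q) (hθ : 0 < θ) (hτ : θ * q + 1 ≤ τ) (a : ℝ) :
    ∃ v, Monotone v ∧ Function.IsFixedPt (picardOperator C q τ θ a g) v := by
  have hg (t : ℝ) : 0 ≤ g t := (hg_pos t).le
  have hqτ : θ * q < τ := by linarith
  have hτ₁ : 1 ≤ τ := by linarith [mul_nonneg hθ.le hq]
  exact exists_monotone_isFixedPt
    (fun u hu => monotone_picardOperator hC.le hθ hτ₁ hqτ hg (hg_mono.comp hu))
    (fun u hu w hw huw => picardOperator_le_picardOperator hC.le hθ hτ₁ hqτ hg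
      (hg_mono.comp hu) (hg_mono.comp hw) fun s => hg_mono (huw s))
    (monotone_const (c := a)) (le_picardOperator hC.le hθ hg)
    (hKO.bddAbove_subsolutions hg_cont hg_mono hg_pos hC hq hθ hτ a)

lemma deriv_pos_and_deriv_deriv_pos (hg_cont : Continuous g) (hg_mono : Monotone g)
    (hg_pos : ∀ t, 0 < g t) (hC : 0 < C) (hq : 0 ≤ q) (hθ : 0 < θ) (hτ : 1 ≤ τ)
    (hqτ : θ * q < τ) (hv_cont : Continuous v) (hv_mono : Monotone v)
    (hv : ∀ r, 0 < r → HasDerivAt v (cauchyRHS C q τ θ g v r) r) {r : ℝ} (hr : 0 < r) :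
    0 < deriv v r ∧ DifferentiableAt ℝ (deriv v) r ∧ 0 < deriv (deriv v) r := by
  have hgv := hg_mono.comp hv_mono
  obtain ⟨d, hd_pos, hd⟩ := exists_pos_hasDerivAt_cauchyRHS hC hq hθ hτ hqτ
    (hg_cont.comp hv_cont) hgv hg_pos hr
  have hderiv : deriv v =ᶠ[𝓝 r] cauchyRHS C q τ θ g v := by
    filter_upwards [Ioi_mem_nhds hr] with s hs using (hv s hs).deriv
  have hd' := hd.congr_of_eventuallyEq hderiv
  exact ⟨(hv r hr).deriv ▸ cauchyRHS_pos hC hτ hgv hg_pos hr, hd'.differentiableAt,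
    hd'.deriv ▸ hd_pos⟩

end EntireSolution

theorem entire_existence_of_KO_general
    (g : ℝ → ℝ) (hg_cont : Continuous g) (hg_mono : Monotone g) (hg_pos : ∀ t, 0 < g t)
    (C q θ τ : ℝ) (hC : 0 < C) (hq : 0 ≤ q) (hθ : 0 < θ) (hτ : θ * q + 1 ≤ τ)
    (hKO : KellerOsserman θ g) (a : ℝ) :
    ∃ v : ℝ → ℝ,
      SolvesCauchy C q τ θ a g ⊤ v ∧
      HasDerivWithinAt v 0 (Set.Ici 0) 0 ∧
      ∀ r : ℝ, 0 < r →
        0 < deriv v r ∧ DifferentiableAt ℝ (deriv v) r ∧ 0 < deriv (deriv v) r := by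
  have hqτ : θ * q < τ := by linarith
  have hτ₁ : 1 ≤ τ := by linarith [mul_nonneg hθ.le hq]
  obtain ⟨v, hv_mono, hv⟩ :=
    hKO.exists_isFixedPt_picardOperator hg_cont hg_mono hg_pos hC hq hθ hτ a
  have hv' (r : ℝ) : HasDerivAt v (extendedRHS C q τ θ g v r) r := by
    simpa only [hv.eq] using hasDerivAt_picardOperator (a := a) hC.le hθ hτ₁ hqτ
      (fun t => (hg_pos t).le) (hg_mono.comp hv_mono) r
  have hv_cont : Continuous v := continuous_iff_continuousAt.2 fun r => (hv' r).continuousAt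
  have hv_pos (r : ℝ) (hr : 0 < r) : HasDerivAt v (cauchyRHS C q τ θ g v r) r :=
    (hv' r).congr_deriv (extendedRHS_of_nonneg hr.le)
  exact ⟨v,
    ⟨hv_cont.continuousOn, hv.eq ▸ picardOperator_zero, fun r hr _ => hv_pos r hr⟩,
    ((hv' 0).congr_deriv (extendedRHS_of_nonpos hθ le_rfl)).hasDerivWithinAt,
    fun r hr => deriv_pos_and_deriv_deriv_pos hg_cont hg_mono hg_pos hC hq hθ hτ₁ hqτ hv_cont
      hv_mono hv_pos hr⟩

/-- Sufficiency direction of Theorem 1.2: if `τ ≥ θq + 1` and the Keller–Osserman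
condition holds, then for every initial value `a ≥ 0` the Cauchy problem (★) has an
entire solution on `[0, ∞)` with `v'(0) = 0` (right derivative) and `v' > 0`,
`v'' > 0` on `(0, ∞)`. -/
theorem entire_existence_of_KO
    (g : ℝ → ℝ) (hg_cont : Continuous g) (hg_mono : Monotone g) (hg_pos : ∀ t, 0 < g t)
    (C q θ τ : ℝ) (hC : 0 < C) (hq : 0 ≤ q) (hθ : 0 < θ) (hτ : θ * q + 1 ≤ τ)
    (hKO : KellerOsserman θ g) :
    ∀ a : ℝ, 0 ≤ a → ∃ v : ℝ → ℝ,
      SolvesCauchy C q τ θ a g ⊤ v ∧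
      HasDerivWithinAt v 0 (Set.Ici 0) 0 ∧
      ∀ r : ℝ, 0 < r →
        0 < deriv v r ∧ DifferentiableAt ℝ (deriv v) r ∧ 0 < deriv (deriv v) r :=
  fun a _ => entire_existence_of_KO_general g hg_cont hg_mono hg_pos C q θ τ hC hq hθ hτ hKO a
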